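/- Unsafety of label reuse with reordering: for the linear context Δ = p : ⊕q:m(ℕ).S, q : &{p:m(String).S′, ⏱.S″} and any unrestricted context Γ and affine buffer context Θ′ = Θ·(p→q, m(String)), NO safety property φ_∅ (for the empty reliability relation) holds of Γ;Δ;Θ′. In particular, the output transition labelled pq!m yields contexts Γ; p:S, q:&{p:m(String).S′, ⏱.S″}; Θ·(p→q,m(String))·(p→q,m(ℕ)) in which the buffer contains a message type (p→q, m(ℕ)) matching the branch at q expecting payload type String, violating condition φ-c; hence by condition φ-→ the original contexts cannot satisfy any safety property. -/

import Mathlib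

/-!
# MAGπ!: syntax, semantics, types, typing, and safety

A deep embedding of the MAGπ! calculus (Le Brun & Dardha), with:
roles / labels / variables, linear and replicated processes, networks with
bag buffers, reduction up to structural congruence with failure rules,
session / replicated / message types, the three typing contexts
(unrestricted Γ, linear Δ, affine Θ), the context LTS, the typing
judgement, and the generalised notion of safety property φ_R.
-/

namespace MagPi

abbrev Role := String
abbrev Label := String
abbrev Var := String

/-- Basic types. -/
inductive BType where
  | nat | real | string
deriving DecidableEq

/-- Basic values. -/
inductive Val where
  | vnat (n : ℕ)
  | vreal (r : ℝ)
  | vstr (s : String)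

/-- Typing of basic values. -/
def Val.hasType : Val → BType → Prop
  | .vnat _, .nat => True
  | .vreal _, .real => True
  | .vstr _, .string => True
  | _, _ => False

/-- Payloads: variables or basic values. -/
inductive Payload where
  | var (x : Var)
  | val (v : Val)

/-- Linear processes `P ::= 0 | &_{i∈I} p_i:m_i(x̃_i).P_i [, ⏱.P′] | ⊕p:m⟨c̃⟩.P`. -/
inductive LProc where
  | nil : LProc
  | recv (bs : List (Role × Label × List Var × LProc)) (tmo : Option LProc) : LProc
  | send (q : Role) (m : Label) (cs : List Payload) (cont : LProc) : LProc

/-- Process instructions `𝒫 ::= !_{i∈I} p_i:m_i(x̃_i).P_i | 𝒫 | 𝒫 | P`. -/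
inductive Proc where
  | repl (bs : List (Role × Label × List Var × LProc)) : Proc
  | par (P1 P2 : Proc) : Proc
  | lin (Q : LProc) : Proc

/-- A message `⟨p→q, m⟨ṽ⟩⟩`: source, destination, label, payload values. -/
abbrev Msg := Role × Role × Label × List Val

/-- A buffer is a multiset (bag) of messages. -/
abbrev Buf := Multiset Msg

/-- Networks `𝒩 ::= p ◁ 𝒫 | 𝒩 ‖ 𝒩 | ℬ`. -/
inductive Network where
  | proc (p : Role) (P : Proc)
  | par (N1 N2 : Network)
  | buf (B : Buf)

/-! ## Substitution -/

abbrev Env := Var → Option Val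

def Env.remove (σ : Env) (xs : List Var) : Env := fun y => if y ∈ xs then none else σ y

def mkEnv (xs : List Var) (vs : List Val) : Env := fun y => (xs.zip vs).lookup y

def Payload.subst (σ : Env) : Payload → Payload
  | .var x =>
    match σ x with
    | some v => .val v
    | none => .var x
  | .val v => .val v

mutual
/-- Capture-avoiding substitution of values for variables in a linear process. -/
def LProc.subst (σ : Env) : LProc → LProc
  | .nil => .nil
  | .recv bs tmo => .recv (substBranches σ bs) (substOpt σ tmo)
  | .send q m cs cont => .send q m (cs.map (Payload.subst σ)) (LProc.subst σ cont)

def substBranches (σ : Env) :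
    List (Role × Label × List Var × LProc) → List (Role × Label × List Var × LProc)
  | [] => []
  | (q, m, xs, P) :: rest => (q, m, xs, LProc.subst (σ.remove xs) P) :: substBranches σ rest

def substOpt (σ : Env) : Option LProc → Option LProc
  | none => none
  | some P => some (LProc.subst σ P)
end

/-! ## Structural congruence -/

/-- Roles occurring as process owners in a network. -/
def Network.roles : Network → Set Role
  | .proc p _ => {p}
  | .par N1 N2 => N1.roles ∪ N2.roles
  | .buf _ => ∅

/-- Structural congruence on process instructions. -/
inductive PCong : Proc → Proc → Prop
  | refl (P) : PCong P P
  | symm : PCong P Q → PCong Q P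
  | trans : PCong P Q → PCong Q R → PCong P R
  | parComm (P Q) : PCong (.par P Q) (.par Q P)
  | parAssoc (P Q R) : PCong (.par (.par P Q) R) (.par P (.par Q R))
  | parNil (P) : PCong (.par P (.lin .nil)) P
  | parCong : PCong P P' → PCong Q Q' → PCong (.par P Q) (.par P' Q')

/-- Structural congruence on networks. -/
inductive NCong : Network → Network → Prop
  | refl (N) : NCong N N
  | symm : NCong N N' → NCong N' N
  | trans : NCong N1 N2 → NCong N2 N3 → NCong N1 N3
  | parComm (N1 N2) : NCong (.par N1 N2) (.par N2 N1)
  | parAssoc (N1 N2 N3) : NCong (.par (.par N1 N2) N3) (.par N1 (.par N2 N3))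
  | parNil : p ∉ N.roles → NCong (.par N (.proc p (.lin .nil))) N
  | parCong : NCong N1 N1' → NCong N2 N2' → NCong (.par N1 N2) (.par N1' N2')
  | procCong : PCong P P' → NCong (.proc p P) (.proc p P')

/-! ## Reliability and network reduction -/

/-- A reliability relation is a set of unordered pairs `{p,q}` of distinct roles. -/
def IsReliability (R : Set (Set Role)) : Prop :=
  ∀ s ∈ R, ∃ p q : Role, p ≠ q ∧ s = {p, q}

/-- `{p,q} ∈ R`: communication between `p` and `q` is reliable. -/
def Reliab (R : Set (Set Role)) (p q : Role) : Prop := ({p, q} : Set Role) ∈ R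

/-- Network reduction `→_R`, defined up to structural congruence. -/
inductive NetRed (R : Set (Set Role)) : Network → Network → Prop
  /-- [P-Send] -/
  | send {p q m vs P B} :
      NetRed R (.par (.proc p (.lin (.send q m (vs.map Payload.val) P))) (.buf B))
               (.par (.proc p (.lin P)) (.buf (B + {(p, q, m, vs)})))
  /-- [P-Recv] -/
  | recv {p q l ys vs Pk bs tmo B} :
      (q, l, ys, Pk) ∈ bs → ys.length = vs.length →
      NetRed R (.par (.proc p (.lin (.recv bs tmo))) (.buf (B + {(q, p, l, vs)})))
               (.par (.proc p (.lin (Pk.subst (mkEnv ys vs)))) (.buf B))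
  /-- [P-!Recv] -/
  | replRecv {p q l ys vs Pk bs B} :
      (q, l, ys, Pk) ∈ bs → ys.length = vs.length →
      NetRed R (.par (.proc p (.repl bs)) (.buf (B + {(q, p, l, vs)})))
               (.par (.proc p (.par (.repl bs) (.lin (Pk.subst (mkEnv ys vs))))) (.buf B))
  /-- [F-Drop] -/
  | drop {p q m vs B} :
      ¬ Reliab R p q →
      NetRed R (.buf (B + {(p, q, m, vs)})) (.buf B)
  /-- [F-Timeout] -/
  | timeout {p bs Q} :
      NetRed R (.proc p (.lin (.recv bs (some Q)))) (.proc p (.lin Q))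
  /-- [N-‖] -/
  | parN {N N' N''} : NetRed R N N' → NetRed R (.par N N'') (.par N' N'')
  /-- [P-|] -/
  | parP {N N' p P P' P''} :
      NetRed R (.par N (.proc p P)) (.par N' (.proc p P')) →
      NetRed R (.par N (.proc p (.par P P''))) (.par N' (.proc p (.par P' P'')))
  /-- closure under structural congruence -/
  | cong {N1 N1' N2 N2'} :
      NCong N1 N1' → NetRed R N1' N2' → NCong N2' N2 → NetRed R N1 N2

/-- Multi-step network reduction `→_R*`. -/
abbrev NetRedStar (R : Set (Set Role)) : Network → Network → Prop :=
  Relation.ReflTransGen (NetRed R)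

/-! ## Types -/

/-- Session types `S ::= ⊕_{i∈I} p_i:m_i(B̃_i).S_i | &_{i∈I} p_i:m_i(B̃_i).S_i [, ⏱.S′] | S|S | end`. -/
inductive SType where
  | endT : SType
  | sel (bs : List (Role × Label × List BType × SType)) : SType
  | branch (bs : List (Role × Label × List BType × SType)) (tmo : Option SType) : SType
  | par (S1 S2 : SType) : SType

/-- Replicated types `R ::= !_{i∈I} p_i:m_i(B̃_i).S_i`. -/
abbrev RType := List (Role × Label × List BType × SType)

/-- Message types `(p→q, m(B̃))`. -/
abbrev MType := Role × Role × Label × List BType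

/-- Unrestricted context Γ: variables to basic types, roles to replicated types. -/
structure GCtx where
  vars : Var → Option BType
  roles : Role → Option RType

/-- Linear context Δ: roles to session types. -/
abbrev DCtx := Role → Option SType

/-- Affine context Θ: a multiset of message types. -/
abbrev TCtx := Multiset MType

def DCtx.empty : DCtx := fun _ => none

def DCtx.single (p : Role) (S : SType) : DCtx := fun q => if q = p then some S else none

/-- Context update `Δ₁ + Δ₂` (clashing entries are composed in parallel). -/
def DCtx.add (Δ1 Δ2 : DCtx) : DCtx := fun p =>
  match Δ1 p, Δ2 p with
  | none, o => o
  | some S, none => some S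
  | some S1, some S2 => some (.par S1 S2)

/-- Pointwise context splitting of a single entry. -/
inductive OSplit : Option SType → Option SType → Option SType → Prop
  | none : OSplit none none none
  | left (S) : OSplit (some S) (some S) none
  | right (S) : OSplit (some S) none (some S)
  | par (S1 S2) : OSplit (some (.par S1 S2)) (some S1) (some S2)

/-- Context splitting `Δ = Δ₁ · Δ₂`. -/
def DSplit (Δ Δ1 Δ2 : DCtx) : Prop := ∀ p, OSplit (Δ p) (Δ1 p) (Δ2 p)

/-- Disjoint-domain context composition requirement. -/
def DDisj (Δ1 Δ2 : DCtx) : Prop := ∀ p, Δ1 p = none ∨ Δ2 p = none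

/-- `end(Δ)`: every session type in Δ is `end`. -/
def EndCtx (Δ : DCtx) : Prop := ∀ p S, Δ p = some S → S = SType.endT

/-! ## Context LTS and context reduction -/

/-- Actions: output `pq!m`, communication `pq:m`, timeout `p⏱`. -/
inductive Action where
  | out (p q : Role) (m : Label)
  | com (p q : Role) (m : Label)
  | time (p : Role)

/-- The type-level LTS on contexts. -/
inductive CtxStep (Γ : GCtx) : DCtx → TCtx → Action → DCtx → TCtx → Prop
  /-- [Δ-⏱] -/
  | timeout {Δ0 Δ Θ p bs S'} :
      DSplit Δ0 Δ (DCtx.single p (.branch bs (some S'))) →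
      CtxStep Γ Δ0 Θ (.time p) (Δ.add (DCtx.single p S')) Θ
  /-- [Δ-⊕] -/
  | send {Δ0 Δ Θ p bs q m Bs Sk} :
      DSplit Δ0 Δ (DCtx.single p (.sel bs)) → (q, m, Bs, Sk) ∈ bs →
      CtxStep Γ Δ0 Θ (.out p q m) (Δ.add (DCtx.single p Sk)) (Θ + {(p, q, m, Bs)})
  /-- [Δ-C] -/
  | com {Δ0 Δ Θ p bs tmo q m Bs Sk} :
      DSplit Δ0 Δ (DCtx.single p (.branch bs tmo)) → (q, m, Bs, Sk) ∈ bs →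
      CtxStep Γ Δ0 (Θ + {(q, p, m, Bs)}) (.com q p m) (Δ.add (DCtx.single p Sk)) Θ
  /-- [Γ-!C] -/
  | bang {Δ Θ p tbs q m Bs Sk} :
      Γ.roles p = some tbs → (q, m, Bs, Sk) ∈ tbs →
      CtxStep Γ Δ (Θ + {(q, p, m, Bs)}) (.com q p m) (Δ.add (DCtx.single p Sk)) Θ

/-- Context reduction `Γ;Δ;Θ → Γ;Δ′;Θ′`. -/
def CtxRed (Γ : GCtx) (c c' : DCtx × TCtx) : Prop :=
  ∃ α, CtxStep Γ c.1 c.2 α c'.1 c'.2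

/-- Multi-step context reduction `→*`. -/
abbrev CtxRedStar (Γ : GCtx) : DCtx × TCtx → DCtx × TCtx → Prop :=
  Relation.ReflTransGen (CtxRed Γ)

/-! ## Typing -/

/-- Typing of payloads under Γ ([T-Var], [T-Val]). -/
def PayloadTyped (Γ : GCtx) : Payload → BType → Prop
  | .var x, B => Γ.vars x = some B
  | .val v, B => v.hasType B

/-- Extend the variable part of Γ with bindings `x̃ : B̃`. -/
def GCtx.addVars (Γ : GCtx) (xs : List Var) (Bs : List BType) : GCtx :=
  { Γ with
    vars := fun y =>
      match (xs.zip Bs).lookup y with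
      | some B => some B
      | none => Γ.vars y }

/-- Typing of linear processes located at a role ([T-0], [T-⊕], [T-&]). -/
inductive LTyped : GCtx → DCtx → Role → LProc → Prop
  | nil {Γ Δ p} : EndCtx Δ → LTyped Γ Δ p .nil
  | send {Γ p tbs q m Bs Sk cs cont} :
      (tbs.map fun b => (b.1, b.2.1)).Nodup →
      (q, m, Bs, Sk) ∈ tbs →
      List.Forall₂ (PayloadTyped Γ) cs Bs →
      LTyped Γ (DCtx.single p Sk) p cont →
      LTyped Γ (DCtx.single p (.sel tbs)) p (.send q m cs cont)
  | recv {Γ p pbs tbs ptmo ttmo} :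
      tbs ≠ [] →
      (tbs.map fun b => (b.1, b.2.1)).Nodup →
      pbs.length = tbs.length →
      (∀ i (h1 : i < pbs.length) (h2 : i < tbs.length),
          (pbs.get ⟨i, h1⟩).1 = (tbs.get ⟨i, h2⟩).1) →
      (∀ i (h1 : i < pbs.length) (h2 : i < tbs.length),
          (pbs.get ⟨i, h1⟩).2.1 = (tbs.get ⟨i, h2⟩).2.1) →
      (∀ i (h1 : i < pbs.length) (h2 : i < tbs.length),
          (pbs.get ⟨i, h1⟩).2.2.1.length = (tbs.get ⟨i, h2⟩).2.2.1.length) →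
      (∀ i (h1 : i < pbs.length) (h2 : i < tbs.length),
          LTyped (GCtx.addVars Γ (pbs.get ⟨i, h1⟩).2.2.1 (tbs.get ⟨i, h2⟩).2.2.1)
            (DCtx.single p (tbs.get ⟨i, h2⟩).2.2.2) p (pbs.get ⟨i, h1⟩).2.2.2) →
      ptmo.isSome = ttmo.isSome →
      (∀ P' S', ptmo = some P' → ttmo = some S' → LTyped Γ (DCtx.single p S') p P') →
      LTyped Γ (DCtx.single p (.branch tbs ttmo)) p (.recv pbs ptmo)

/-- Matching of process branches against type branches (same sources and
labels, payload arities match, and each continuation is well typed). -/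
def BranchesTyped (Γ : GCtx) (p : Role) (pbs : List (Role × Label × List Var × LProc))
    (tbs : RType) : Prop :=
  List.Forall₂
    (fun (pb : Role × Label × List Var × LProc) (tb : Role × Label × List BType × SType) =>
      pb.1 = tb.1 ∧ pb.2.1 = tb.2.1 ∧ pb.2.2.1.length = tb.2.2.1.length ∧
        LTyped (Γ.addVars pb.2.2.1 tb.2.2.1) (DCtx.single p tb.2.2.2) p pb.2.2.2)
    pbs tbs

/-- Typing of process instructions ([T-!], [T-|]). -/
inductive PTyped (Γ : GCtx) : DCtx → Role → Proc → Prop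
  | lin {Δ p Q} : LTyped Γ Δ p Q → PTyped Γ Δ p (.lin Q)
  | repl {p pbs tbs} :
      Γ.roles p = some tbs →
      tbs ≠ [] →
      (tbs.map fun b => (b.1, b.2.1)).Nodup →
      BranchesTyped Γ p pbs tbs →
      PTyped Γ DCtx.empty p (.repl pbs)
  | par {Δ Δ1 Δ2 p P1 P2} :
      DSplit Δ Δ1 Δ2 → PTyped Γ Δ1 p P1 → PTyped Γ Δ2 p P2 → PTyped Γ Δ p (.par P1 P2)

/-- Typing of buffers ([T-Empty], [T-Buf]); Θ is affine so unused message
types may be left over. -/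
inductive BTyped (Γ : GCtx) : TCtx → Buf → Prop
  | empty {Θ} : BTyped Γ Θ 0
  | cons {Θ B p q m vs Bs} :
      List.Forall₂ Val.hasType vs Bs →
      BTyped Γ Θ B →
      BTyped Γ (Θ + {(p, q, m, Bs)}) (B + {(p, q, m, vs)})

/-- The typing judgement `Γ;Δ;Θ ⊢ 𝒩` ([T-‖₁], [T-‖₂] and the process rules). -/
inductive NTyped (Γ : GCtx) : DCtx → TCtx → Network → Prop
  | proc {Δ p P} : PTyped Γ Δ p P → NTyped Γ Δ 0 (.proc p P)
  | buf {Θ B} : BTyped Γ Θ B → NTyped Γ DCtx.empty Θ (.buf B)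
  | parNet {Δ1 Δ2 N1 N2} :
      DDisj Δ1 Δ2 → NTyped Γ Δ1 0 N1 → NTyped Γ Δ2 0 N2 →
      NTyped Γ (Δ1.add Δ2) 0 (.par N1 N2)
  | parBuf {Δ Θ N B} :
      NTyped Γ Δ 0 N → BTyped Γ Θ B → NTyped Γ Δ Θ (.par N (.buf B))

/-! ## Safety properties -/

/-- `φ_R` is a safety property: conditions [φ-r₁], [φ-r₂], [φ-c], [φ-!c], [φ-→]. -/
def IsSafetyProp (R : Set (Set Role)) (φ : GCtx → DCtx → TCtx → Prop) : Prop :=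
  -- [φ-r₁]: branches without timeout receive only from reliable peers
  (∀ Γ Δ0 Δ Θ p (bs : List (Role × Label × List BType × SType)),
      φ Γ Δ0 Θ → DSplit Δ0 Δ (DCtx.single p (.branch bs none)) →
      ∀ b ∈ bs, ({b.1, p} : Set Role) ∈ R) ∧
  -- [φ-r₂]: branches with timeout have some unreliable source
  (∀ Γ Δ0 Δ Θ p (bs : List (Role × Label × List BType × SType)) S',
      φ Γ Δ0 Θ → DSplit Δ0 Δ (DCtx.single p (.branch bs (some S'))) →
      ∃ b ∈ bs, ({b.1, p} : Set Role) ∉ R) ∧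
  -- [φ-c]: a message type matching a linear branch has the expected payload types
  (∀ Γ Δ0 Δ Θ p (bs : List (Role × Label × List BType × SType)) tmo q m Bs Sk Bs',
      φ Γ Δ0 (Θ + {(q, p, m, Bs')}) →
      DSplit Δ0 Δ (DCtx.single p (.branch bs tmo)) →
      (q, m, Bs, Sk) ∈ bs →
      Bs' = Bs) ∧
  -- [φ-!c]: a message type matching a replicated receive has the expected payload types
  (∀ Γ Δ Θ p (tbs : RType) q m Bs Sk Bs',
      φ Γ Δ (Θ + {(q, p, m, Bs')}) →
      Γ.roles p = some tbs →
      (q, m, Bs, Sk) ∈ tbs →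
      Bs' = Bs) ∧
  -- [φ-→]: preservation under context reduction
  (∀ Γ Δ Θ Δ' Θ',
      φ Γ Δ Θ → CtxRed Γ (Δ, Θ) (Δ', Θ') → φ Γ Δ' Θ')

theorem DSplit.of_apply_eq_some {Δ : DCtx} {p : Role} {S : SType} (hp : Δ p = some S) :
    DSplit Δ (Function.update Δ p none) (DCtx.single p S) := by
  intro r
  obtain rfl | hr := eq_or_ne r p
  · simpa only [hp, Function.update_self, DCtx.single, if_true] using OSplit.right S
  · simp only [Function.update_of_ne hr, DCtx.single, if_neg hr]
    cases Δ r with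
    | none => exact .none
    | some T => exact .left T

theorem DCtx.update_none_add_single (Δ : DCtx) (p : Role) (S : SType) :
    DCtx.add (Function.update Δ p none) (DCtx.single p S) = Function.update Δ p (some S) := by
  funext r
  obtain rfl | hr := eq_or_ne r p
  · simp only [DCtx.add, DCtx.single, Function.update_self, if_true]
  · simp only [DCtx.add, DCtx.single, Function.update_of_ne hr, if_neg hr]
    cases Δ r <;> rfl

theorem CtxStep.send_of_apply_eq_some {Γ : GCtx} {Δ : DCtx} {Θ : TCtx} {p q : Role} {m : Label}
    {bs : List (Role × Label × List BType × SType)} {Bs : List BType} {S : SType}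
    (hp : Δ p = some (.sel bs)) (hS : (q, m, Bs, S) ∈ bs) :
    CtxStep Γ Δ Θ (.out p q m) (Function.update Δ p (some S)) (Θ + {(p, q, m, Bs)}) := by
  rw [← DCtx.update_none_add_single]
  exact .send (.of_apply_eq_some hp) hS

section SafetyProp

variable {R : Set (Set Role)} {φ : GCtx → DCtx → TCtx → Prop} {Γ : GCtx} {Δ : DCtx} {Θ : TCtx}

theorem IsSafetyProp.of_ctxStep (hφ : IsSafetyProp R φ) {α : Action} {Δ' : DCtx} {Θ' : TCtx}
    (h : φ Γ Δ Θ) (hstep : CtxStep Γ Δ Θ α Δ' Θ') : φ Γ Δ' Θ' :=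
  have ⟨_, _, _, _, of_ctxRed⟩ := hφ
  of_ctxRed _ _ _ _ _ h ⟨α, hstep⟩

theorem IsSafetyProp.payload_eq (hφ : IsSafetyProp R φ) {p q : Role} {m : Label}
    {bs : List (Role × Label × List BType × SType)} {tmo : Option SType}
    {Bs Bs' : List BType} {S : SType} (h : φ Γ Δ (Θ + {(p, q, m, Bs')}))
    (hq : Δ q = some (.branch bs tmo)) (hS : (p, m, Bs, S) ∈ bs) : Bs' = Bs :=
  have ⟨_, _, payload_eq_of_dsplit, _, _⟩ := hφ
  payload_eq_of_dsplit _ _ _ _ _ _ _ _ _ _ _ _ h (.of_apply_eq_some hq) hS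

theorem label_reuse_unsafe_general (hφ : IsSafetyProp R φ) {p q : Role} {m : Label}
    {bs bs' : List (Role × Label × List BType × SType)} {tmo : Option SType}
    {Bs Bs' : List BType} {S S' : SType}
    (hp : Δ p = some (.sel bs)) (hS : (q, m, Bs, S) ∈ bs)
    (hq : Δ q = some (.branch bs' tmo)) (hS' : (p, m, Bs', S') ∈ bs') (hBs : Bs ≠ Bs') :
    ¬ φ Γ Δ Θ := by
  intro h
  have hqp : q ≠ p := by
    rintro rfl
    simp [hp] at hq
  have h_sent : φ Γ (Function.update Δ p (some S)) (Θ + {(p, q, m, Bs)}) :=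
    hφ.of_ctxStep h (.send_of_apply_eq_some hp hS)
  have hq_sent : Function.update Δ p (some S) q = some (.branch bs' tmo) := by
    rw [Function.update_of_ne hqp, hq]
  exact hBs (hφ.payload_eq h_sent hq_sent hS')

end SafetyProp

/-- **Unsafety of label reuse with reordering** (Example: Interactions with
Failure, Types/Safety): for the linear context
`Δ = p : ⊕q:m(ℕ).S, q : &{p:m(String).S′, ⏱.S″}` and any `Γ` and
`Θ′ = Θ·(p→q, m(String))`, no safety property for the empty reliability
relation holds of `Γ;Δ;Θ′`. -/
theorem label_reuse_unsafe
    (p q : Role) (hpq : p ≠ q) (m : Label)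
    (S S' S'' : SType) (Γ : GCtx) (Θ : TCtx) (Δ : DCtx)
    (hΔ : Δ = fun r =>
      if r = p then some (.sel [(q, m, [.nat], S)])
      else if r = q then some (.branch [(p, m, [.string], S')] (some S''))
      else none)
    (φ : GCtx → DCtx → TCtx → Prop) (hφ : IsSafetyProp (∅ : Set (Set Role)) φ) :
    ¬ φ Γ Δ (Θ + {(p, q, m, [BType.string])}) := by
  subst hΔ
  exact label_reuse_unsafe_general hφ (if_pos rfl) (List.mem_singleton_self _)
    ((if_neg hpq.symm).trans (if_pos rfl)) (List.mem_singleton_self _) (by decide)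

end MagPi
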